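/- Let C ⊆ X be closed and r > 0. For every t ∈ ℝ, limsup_{n→∞} (1/n) log ∑_{i ∈ Σ^n : U(L_n[i]) ⊆ B(C,r)} s_i^t ≤ sup { t∫Λ dμ + h(μ) : μ ∈ 𝒫_S(Σ^ℕ), U μ ∈ B(C,r) }. -/

import Mathlib

open MeasureTheory Filter Topology Metric Set
open scoped ENNReal NNReal Classical

namespace Multifractal

/-- Infinite strings over `{1,…,N}`. -/
abbrev Seq (N : ℕ) := ℕ → Fin N

/-- Finite strings over `{1,…,N}` (the empty string is excluded where appropriate). -/
abbrev Word (N : ℕ) := List (Fin N)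

variable {N : ℕ}

/-- The shift map on `Σ^ℕ`. -/
def shift : Seq N → Seq N := fun x n => x (n + 1)

/-- The cylinder `[w]` generated by a finite string `w`. -/
def cylinder (w : Word N) : Set (Seq N) :=
  {x : Seq N | ∀ (k : ℕ) (h : k < w.length), x k = w.get ⟨k, h⟩}

/-- Birkhoff sum `∑_{k<n} φ(S^k x)`. -/
noncomputable def birkhoff (φ : Seq N → ℝ) (n : ℕ) (x : Seq N) : ℝ :=
  ∑ k ∈ Finset.range n, φ (shift^[k] x)

/-- `s_w = sup_{x ∈ [w]} exp (∑_{k<|w|} Λ(S^k x))`. -/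
noncomputable def sWord (Λ : Seq N → ℝ) (w : Word N) : ℝ :=
  sSup ((fun x => Real.exp (birkhoff Λ w.length x)) '' cylinder w)

/-- Bounded distortion (condition (C3)): `exp(S_nΛ(i))/exp(S_nΛ(j)) ∈ [1/c, c]`
whenever `i|n = j|n`.  (By symmetry in `i,j` the one-sided bound suffices.) -/
def BddDistortion (Λ : Seq N → ℝ) (c : ℝ) : Prop :=
  ∀ (n : ℕ) (i j : Seq N), (∀ k < n, i k = j k) →
    Real.exp (birkhoff Λ n i) ≤ c * Real.exp (birkhoff Λ n j)

/-- The empirical measure `L_n x = (1/n) ∑_{k<n} δ_{S^k x}` (junk value `δ_x` for `n = 0`). -/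
noncomputable def emp (n : ℕ) (x : Seq N) : ProbabilityMeasure (Seq N) :=
  if h : n = 0 then ⟨Measure.dirac x, inferInstance⟩
  else
    ⟨(n : ℝ≥0∞)⁻¹ • ∑ k ∈ Finset.range n, Measure.dirac (shift^[k] x), by
      constructor
      simp only [Measure.smul_apply, Measure.coe_finset_sum, Finset.sum_apply, measure_univ,
        Finset.sum_const, Finset.card_range, nsmul_eq_mul, mul_one, smul_eq_mul]
      exact ENNReal.inv_mul_cancel (Nat.cast_ne_zero.mpr h) (ENNReal.natCast_ne_top n)⟩

/-- Shift invariance of a probability measure. -/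
def Invariant (μ : ProbabilityMeasure (Seq N)) : Prop :=
  μ.toMeasure.map shift = μ.toMeasure

/-- `n`-th partition entropy `-∑_{|w|=n} μ[w] log μ[w]`. -/
noncomputable def entropyAux (μ : ProbabilityMeasure (Seq N)) (n : ℕ) : ℝ :=
  -∑ w : Fin n → Fin N,
      (μ (cylinder (List.ofFn w)) : ℝ) * Real.log (μ (cylinder (List.ofFn w)) : ℝ)

/-- The Kolmogorov–Sinai entropy of a (shift-invariant) measure on the full shift,
via the generating partition into cylinders. -/
noncomputable def entropy (μ : ProbabilityMeasure (Seq N)) : ℝ :=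
  Filter.atTop.liminf fun n => entropyAux μ n / n

/-- Abscissa of convergence of the "zeta-function" `s ↦ ∑ a_w^s`, the sum ranging over the
nonempty finite strings satisfying `P`; values in `EReal` (so `⊤` if never summable and `⊥`
if always summable, e.g. for an empty index set). -/
noncomputable def sigmaAbs (a : Word N → ℝ) (P : Word N → Prop) : EReal :=
  sInf ((fun t : ℝ => (t : EReal)) ''
    {t : ℝ | Summable fun w : {w : Word N // w ≠ [] ∧ P w} => a w.1 ^ t})

variable {X : Type*}

/-- `U(L_{|w|}[w]) ⊆ B`. -/
def inTarget (U : ProbabilityMeasure (Seq N) → X) (B : Set X) (w : Word N) : Prop :=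
  ∀ x ∈ cylinder w, U (emp w.length x) ∈ B

/-- The closed `r`-neighbourhood `B(C,r)` of a set. -/
def cball [MetricSpace X] (C : Set X) (r : ℝ) : Set X := {x | infDist x C ≤ r}

/-- The counting function `N_δ^{U,Λ}(C,r)`: number of strings `w` with `s_w ≈ δ` and
`U(L_{|w|}[w]) ⊆ B(C,r)`. -/
noncomputable def Ncount [MetricSpace X] (Λ : Seq N → ℝ) (U : ProbabilityMeasure (Seq N) → X)
    (C : Set X) (r δ : ℝ) : ℕ :=
  Set.ncard {w : Word N | w ≠ [] ∧ sWord Λ w ≤ δ ∧ δ < sWord Λ w.dropLast ∧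
    inTarget U (cball C r) w}

/-- `log m / (-log δ)`, read as `-∞` when `m = 0`. -/
noncomputable def ratioE (m : ℕ) (δ : ℝ) : EReal :=
  if m = 0 then ⊥ else (((Real.log m) / (-Real.log δ) : ℝ) : EReal)

/-- The `r`-approximate lower coarse multifractal spectrum `f̲^{U,Λ}(C,r)`. -/
noncomputable def coarseLowerR [MetricSpace X] (Λ : Seq N → ℝ)
    (U : ProbabilityMeasure (Seq N) → X) (C : Set X) (r : ℝ) : EReal :=
  Filter.liminf (fun δ : ℝ => ratioE (Ncount Λ U C r δ) δ) (𝓝[>] (0 : ℝ))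

/-- The lower coarse multifractal spectrum `f̲^{U,Λ}(C) = lim_{r↘0} f̲^{U,Λ}(C,r)`;
since `f̲^{U,Λ}(C,r)` is nondecreasing in `r`, the limit is the infimum over `r > 0`. -/
noncomputable def coarseLower [MetricSpace X] (Λ : Seq N → ℝ)
    (U : ProbabilityMeasure (Seq N) → X) (C : Set X) : EReal :=
  ⨅ (r : ℝ) (_ : 0 < r), coarseLowerR Λ U C r

/-- The variational quantity `sup { -h(μ)/∫Λ dμ : μ shift-invariant, Uμ ∈ C }`. -/
noncomputable def varSup (Λ : Seq N → ℝ) (U : ProbabilityMeasure (Seq N) → X)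
    (C : Set X) : EReal :=
  sSup {x : EReal | ∃ μ : ProbabilityMeasure (Seq N), Invariant μ ∧ U μ ∈ C ∧
    x = ((-(entropy μ) / ∫ y, Λ y ∂μ.toMeasure : ℝ) : EReal)}

end Multifractal

namespace Multifractal

/-- The finite-level sum `∑_{i ∈ Σ^n, U(L_n[i]) ⊆ B} s_i^t`. -/
noncomputable def levelSum {N : ℕ} {X : Type*} (Λ : Seq N → ℝ)
    (U : ProbabilityMeasure (Seq N) → X) (B : Set X) (t : ℝ) (n : ℕ) : ℝ :=
  ∑ i : Fin n → Fin N,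
    if inTarget U B (List.ofFn i) then sWord Λ (List.ofFn i) ^ t else 0

/-- `(log x)/n` as an extended real, read as `-∞` when `x ≤ 0` (i.e. when the sum is empty). -/
noncomputable def logDivE (x : ℝ) (n : ℕ) : EReal :=
  if 0 < x then ((Real.log x / n : ℝ) : EReal) else ⊥

theorem shift_iterate_apply (n : ℕ) (x : Seq N) (i : ℕ) : (shift^[n] x) i = x (n + i) := by
  induction n generalizing x with
  | zero => simp
  | succ n ih =>
    rw [Function.iterate_succ_apply, ih]
    simp only [shift]
    congr 1
    omega

theorem continuous_shift : Continuous (shift : Seq N → Seq N) :=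
  continuous_pi fun n => continuous_apply (n + 1)

/-- The infinite string `w y`. -/
def prepend {n : ℕ} (w : Fin n → Fin N) (y : Seq N) : Seq N :=
  fun i => if h : i < n then w ⟨i, h⟩ else y (i - n)

theorem prepend_mem_cylinder {n : ℕ} (w : Fin n → Fin N) (y : Seq N) :
    prepend w y ∈ cylinder (List.ofFn w) := by
  intro k hk
  rw [List.length_ofFn] at hk
  simp [prepend, hk]

theorem prepend_cons {n : ℕ} (a : Fin N) (w : Fin n → Fin N) (y : Seq N) :
    prepend (Fin.cons a w : Fin (n + 1) → Fin N) y =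
      prepend (fun _ : Fin 1 => a) (prepend w y) := by
  funext i
  cases i with
  | zero => simp [prepend]
  | succ i =>
    by_cases h : i < n
    · simp only [prepend, Nat.add_lt_add_iff_right, h, dite_true]
      rw [dif_neg (by omega)]
      simp only [Nat.add_sub_cancel, h, dite_true]
      rfl
    · simp [prepend, h]

/-- Sum of `F` over all one-letter extensions to the left. -/
noncomputable def transfer (F : Seq N → ℝ) : Seq N → ℝ :=
  fun y => ∑ a : Fin N, F (prepend (fun _ : Fin 1 => a) y)

theorem transfer_iterate (n : ℕ) (F : Seq N → ℝ) (y : Seq N) :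
    transfer^[n] F y = ∑ w : Fin n → Fin N, F (prepend w y) := by
  induction n generalizing F y with
  | zero =>
    rw [Fintype.sum_unique]
    exact congrArg F (funext fun i => by simp [prepend])
  | succ n ih =>
    rw [Function.iterate_succ_apply, ih, ← (Fin.consEquiv fun _ => Fin N).sum_comp,
      Fintype.sum_prod_type_right]
    refine Finset.sum_congr rfl fun w _ => Finset.sum_congr rfl fun a _ => ?_
    exact congrArg F (prepend_cons a w y).symm

theorem transfer_iterate_mono (n : ℕ) {F G : Seq N → ℝ} (h : ∀ x, F x ≤ G x) (y : Seq N) :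
    transfer^[n] F y ≤ transfer^[n] G y := by
  rw [transfer_iterate, transfer_iterate]
  exact Finset.sum_le_sum fun w _ => h _

theorem shift_iterate_prepend {n : ℕ} (w : Fin n → Fin N) (y : Seq N) :
    shift^[n] (prepend w y) = y := by
  funext i
  simp [shift_iterate_apply, prepend]

theorem transfer_iterate_shift_mul (n : ℕ) (F G : Seq N → ℝ) (y : Seq N) :
    transfer^[n] (fun x => F (shift^[n] x) * G x) y = F y * transfer^[n] G y := by
  simp only [transfer_iterate, shift_iterate_prepend, Finset.mul_sum]

/-- If the weights `e^φ` sum to at most one over blocks of length `k`, then so do their products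
over `m` consecutive disjoint blocks. -/
theorem transfer_iterate_exp_blocks_le {k : ℕ} {φ : Seq N → ℝ}
    (hφ : ∀ y, transfer^[k] (fun x => Real.exp (φ x)) y ≤ 1) (m : ℕ) (y : Seq N) :
    transfer^[m * k] (fun x => Real.exp (∑ l ∈ Finset.range m, φ (shift^[l * k] x))) y ≤ 1 := by
  induction m generalizing y with
  | zero => simp
  | succ m ih =>
    have hfun : (fun x => Real.exp (∑ l ∈ Finset.range (m + 1), φ (shift^[l * k] x))) =
        fun x : Seq N => (fun z => Real.exp (∑ l ∈ Finset.range m, φ (shift^[l * k] z)))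
          (shift^[k] x) * Real.exp (φ x) := by
      funext x
      rw [Finset.sum_range_succ', Real.exp_add]
      simp [Nat.succ_mul, Function.iterate_add_apply]
    rw [Nat.succ_mul, Function.iterate_add_apply, hfun]
    refine (transfer_iterate_mono _ (fun x => ?_) y).trans (ih y)
    rw [transfer_iterate_shift_mul k
      (fun z => Real.exp (∑ l ∈ Finset.range m, φ (shift^[l * k] z)))]
    exact mul_le_of_le_one_right (Real.exp_nonneg _) (hφ x)

theorem sum_exp_blocks_le (hN : 0 < N) {k : ℕ} {φ : Seq N → ℝ}
    (hφ : ∀ y, transfer^[k] (fun x => Real.exp (φ x)) y ≤ 1) (m j s : ℕ) (y : Seq N) :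
    ∑ w : Fin (s + (m * k + j)) → Fin N, Real.exp (∑ l ∈ Finset.range m,
      φ (shift^[l * k + j] (prepend w y))) ≤ (N : ℝ) ^ (s + j) := by
  rw [← transfer_iterate _ (fun x => Real.exp (∑ l ∈ Finset.range m, φ (shift^[l * k + j] x))),
    Function.iterate_add_apply, Function.iterate_add_apply]
  have hconst : ∀ (n : ℕ) (b : ℝ) (y : Seq N), transfer^[n] (fun _ => b) y = N ^ n * b := by
    intro n b y
    simp [transfer_iterate]
  have h1 : transfer^[j] (fun x => Real.exp (∑ l ∈ Finset.range m, φ (shift^[l * k + j] x))) =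
      fun x => Real.exp (∑ l ∈ Finset.range m, φ (shift^[l * k] x)) * (N : ℝ) ^ j := by
    funext x
    have := transfer_iterate_shift_mul j
      (fun x => Real.exp (∑ l ∈ Finset.range m, φ (shift^[l * k] x))) (fun _ => 1) x
    simpa [hconst, Function.iterate_add_apply] using this
  rw [h1, pow_add, ← hconst s]
  refine transfer_iterate_mono s (fun x => ?_) y
  rw [transfer_iterate, ← Finset.sum_mul, ← transfer_iterate (m * k)
    (fun x => Real.exp (∑ l ∈ Finset.range m, φ (shift^[l * k] x)))]
  exact mul_le_of_le_one_left (by positivity) (transfer_iterate_exp_blocks_le hφ m x)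

theorem sum_range_mul_eq (f : ℕ → ℝ) (m k : ℕ) :
    ∑ i ∈ Finset.range (m * k), f i =
      ∑ j ∈ Finset.range k, ∑ l ∈ Finset.range m, f (l * k + j) := by
  induction m with
  | zero => simp
  | succ m ih =>
    simp only [Nat.succ_mul, Finset.sum_range_succ, Finset.sum_add_distrib, Finset.sum_range_add,
      ih]

/-- Averaging over the `k` possible positions of the block grid. -/
theorem sum_exp_birkhoff_div_le (hN : 0 < N) {k : ℕ} (hk : 0 < k) {φ : Seq N → ℝ}
    (hφ0 : ∀ x, φ x ≤ 0) (hφ : ∀ y, transfer^[k] (fun x => Real.exp (φ x)) y ≤ 1)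
    {n : ℕ} (hn : k ≤ n) (y : Seq N) :
    ∑ w : Fin n → Fin N, Real.exp (birkhoff φ n (prepend w y) / k) ≤ (N : ℝ) ^ (2 * k) := by
  obtain ⟨m, s, hs, rfl⟩ : ∃ m s, s < k ∧ n = (m + 1) * k + s := by
    refine ⟨n / k - 1, n % k, Nat.mod_lt _ hk, ?_⟩
    have : 1 ≤ n / k := (Nat.one_le_div_iff hk).2 hn
    rw [Nat.sub_add_cancel this, Nat.div_add_mod']
  have hN1 : (1 : ℝ) ≤ N := by exact_mod_cast hN
  have hk' : (0 : ℝ) < k := by exact_mod_cast hk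
  have hpt : ∀ x : Seq N, Real.exp (birkhoff φ ((m + 1) * k + s) x / k) ≤
      ∑ j ∈ Finset.range k, (k : ℝ)⁻¹ *
        Real.exp (∑ l ∈ Finset.range m, φ (shift^[l * k + j] x)) := by
    intro x
    have h1 : birkhoff φ ((m + 1) * k + s) x ≤
        ∑ j ∈ Finset.range k, ∑ l ∈ Finset.range m, φ (shift^[l * k + j] x) := by
      rw [← sum_range_mul_eq (fun i => φ (shift^[i] x)), birkhoff, Nat.succ_mul, add_assoc,
        Finset.sum_range_add]
      exact add_le_of_nonpos_right (Finset.sum_nonpos fun i _ => hφ0 _)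
    have h2 := convexOn_exp.map_sum_le (t := Finset.range k) (w := fun _ => (k : ℝ)⁻¹)
      (p := fun j => ∑ l ∈ Finset.range m, φ (shift^[l * k + j] x))
      (fun _ _ => by positivity) (by simp [hk'.ne']) (fun _ _ => Set.mem_univ _)
    refine le_trans (Real.exp_le_exp.2 ?_) h2
    simp only [smul_eq_mul]
    rw [← Finset.mul_sum, div_eq_inv_mul]
    gcongr
  calc ∑ w, Real.exp (birkhoff φ ((m + 1) * k + s) (prepend w y) / k)
      ≤ ∑ w : Fin ((m + 1) * k + s) → Fin N, ∑ j ∈ Finset.range k, (k : ℝ)⁻¹ *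
        Real.exp (∑ l ∈ Finset.range m, φ (shift^[l * k + j] (prepend w y))) :=
        Finset.sum_le_sum fun w _ => hpt _
    _ = ∑ j ∈ Finset.range k, (k : ℝ)⁻¹ * ∑ w : Fin ((m + 1) * k + s) → Fin N,
        Real.exp (∑ l ∈ Finset.range m, φ (shift^[l * k + j] (prepend w y))) := by
        rw [Finset.sum_comm]
        simp only [Finset.mul_sum]
    _ ≤ ∑ j ∈ Finset.range k, (k : ℝ)⁻¹ * (N : ℝ) ^ (2 * k) := by
        refine Finset.sum_le_sum fun j hj => ?_
        have hj' := Finset.mem_range.1 hj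
        have hlen : (m + 1) * k + s = (k - j + s) + (m * k + j) := by
          rw [Nat.succ_mul]; omega
        rw [hlen]
        gcongr
        refine (sum_exp_blocks_le hN hφ m j (k - j + s) y).trans ?_
        exact pow_le_pow_right₀ hN1 (by omega)
    _ = (N : ℝ) ^ (2 * k) := by
        simp [hk'.ne']

theorem integral_emp {f : Seq N → ℝ} (hf : Continuous f) {n : ℕ} (hn : n ≠ 0) (x : Seq N) :
    ∫ y, f y ∂(emp n x).toMeasure = birkhoff f n x / n := by
  have h : (emp n x).toMeasure =
      (n : ℝ≥0∞)⁻¹ • ∑ k ∈ Finset.range n, Measure.dirac (shift^[k] x) := by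
    simp [emp, hn]
  rw [h, integral_smul_measure, integral_finsetSum_measure]
  · simp [birkhoff, integral_dirac, div_eq_inv_mul]
  · intro i _
    exact hf.integrable_of_hasCompactSupport (HasCompactSupport.of_compactSpace f)

theorem continuous_integral {f : Seq N → ℝ} (hf : Continuous f) :
    Continuous fun μ : ProbabilityMeasure (Seq N) => ∫ y, f y ∂μ.toMeasure :=
  ProbabilityMeasure.continuous_integral_boundedContinuousFunction
    (BoundedContinuousFunction.mkOfCompact ⟨f, hf⟩)

theorem integrable_of_continuous {f : Seq N → ℝ} (hf : Continuous f)
    (μ : ProbabilityMeasure (Seq N)) : Integrable f μ.toMeasure :=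
  hf.integrable_of_hasCompactSupport (HasCompactSupport.of_compactSpace f)

theorem integral_comp_restrict (μ : ProbabilityMeasure (Seq N)) {k : ℕ}
    (g : (Fin k → Fin N) → ℝ) :
    ∫ x, g (fun i => x i) ∂μ.toMeasure =
      ∑ u : Fin k → Fin N, (μ (cylinder (List.ofFn u)) : ℝ) * g u := by
  have hπ : Measurable fun (x : Seq N) (i : Fin k) => x i :=
    measurable_pi_lambda _ fun i => measurable_pi_apply _
  have hmap := Measure.isProbabilityMeasure_map (μ := μ.toMeasure) hπ.aemeasurable
  rw [← integral_map hπ.aemeasurable (f := g) (Measurable.of_discrete.aestronglyMeasurable),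
    integral_fintype Integrable.of_finite]
  refine Finset.sum_congr rfl fun u _ => ?_
  rw [smul_eq_mul, map_measureReal_apply hπ (measurableSet_singleton u)]
  congr 1
  have hset : (fun (x : Seq N) (i : Fin k) => x i) ⁻¹' {u} = cylinder (List.ofFn u) := by
    ext x
    simp only [mem_preimage, mem_singleton_iff, cylinder, mem_ofPred_eq, funext_iff,
      List.length_ofFn, List.get_ofFn]
    exact ⟨fun h k hk => h ⟨k, hk⟩, fun h i => h i i.2⟩
  rw [hset]
  rfl

theorem sum_cylinder_eq_one (μ : ProbabilityMeasure (Seq N)) (k : ℕ) :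
    ∑ u : Fin k → Fin N, (μ (cylinder (List.ofFn u)) : ℝ) = 1 := by
  simpa using (integral_comp_restrict μ (k := k) fun _ => 1).symm

theorem entropyAux_le (hN : 0 < N) (μ : ProbabilityMeasure (Seq N)) (k : ℕ) :
    entropyAux μ k ≤ k * Real.log N := by
  have hM : (0 : ℝ) < (N : ℝ) ^ k := by positivity
  have hpt : ∀ u : Fin k → Fin N, -((μ (cylinder (List.ofFn u)) : ℝ) *
      Real.log (μ (cylinder (List.ofFn u)) : ℝ)) ≤
      (μ (cylinder (List.ofFn u)) : ℝ) * (k * Real.log N) + ((N : ℝ) ^ k)⁻¹ -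
        (μ (cylinder (List.ofFn u)) : ℝ) := by
    intro u
    rcases (NNReal.coe_nonneg (μ (cylinder (List.ofFn u)))).eq_or_lt with h | h
    · rw [← h]
      simp [hM.le]
    · set p : ℝ := (μ (cylinder (List.ofFn u)) : ℝ)
      have h1 := Real.log_le_sub_one_of_pos (x := (p * (N : ℝ) ^ k)⁻¹) (by positivity)
      rw [Real.log_inv, Real.log_mul h.ne' hM.ne', Real.log_pow] at h1
      have h2 := mul_le_mul_of_nonneg_left h1 h.le
      have h3 : p * ((p * (N : ℝ) ^ k)⁻¹ - 1) = ((N : ℝ) ^ k)⁻¹ - p := by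
        field_simp
      linarith
  have h := Finset.sum_le_sum fun u (_ : u ∈ Finset.univ) => hpt u
  rw [Finset.sum_sub_distrib, Finset.sum_add_distrib, ← Finset.sum_mul, sum_cylinder_eq_one,
    Finset.sum_neg_distrib] at h
  simpa [entropyAux, hM.ne'] using h

theorem exists_entropyAux_lt (hN : 0 < N) (μ : ProbabilityMeasure (Seq N)) {b : ℝ}
    (hb : entropy μ < b) : ∃ k : ℕ, 0 < k ∧ entropyAux μ k < k * b := by
  have hcob : IsCoboundedUnder (· ≥ ·) atTop fun n : ℕ => entropyAux μ n / n := by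
    refine IsCoboundedUnder.of_frequently_le (a := Real.log N) (Eventually.frequently ?_)
    filter_upwards [eventually_gt_atTop 0] with n hn
    have hn' : (0 : ℝ) < n := by exact_mod_cast hn
    rw [div_le_iff₀ hn', mul_comm]
    exact entropyAux_le hN μ n
  obtain ⟨k, hk, hk0⟩ :=
    ((frequently_lt_of_liminf_lt hcob hb).and_eventually (eventually_gt_atTop 0)).exists
  have hk' : (0 : ℝ) < k := by exact_mod_cast hk0
  rw [div_lt_iff₀ hk', mul_comm] at hk
  exact ⟨k, hk0, hk⟩

/-- A strictly positive log-weight on blocks of length `k` that is nearly optimal for coding `μ`. -/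
theorem exists_block_weight (hN : 0 < N) (μ : ProbabilityMeasure (Seq N)) (k : ℕ) {d : ℝ}
    (hd : 0 < d) : ∃ φ : Seq N → ℝ, Continuous φ ∧ (∀ x, φ x ≤ 0) ∧
      (∀ y, transfer^[k] (fun x => Real.exp (φ x)) y ≤ 1) ∧
      -(entropyAux μ k + d) ≤ ∫ x, φ x ∂μ.toMeasure := by
  set p : (Fin k → Fin N) → ℝ := fun u => (μ (cylinder (List.ofFn u)) : ℝ) with hp
  have hp0 : ∀ u, 0 ≤ p u := fun u => NNReal.coe_nonneg _
  have hp1 : ∑ u, p u = 1 := sum_cylinder_eq_one μ k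
  set θ : ℝ := Real.exp (-d) with hθ
  have hθ0 : 0 < θ := Real.exp_pos _
  have hθ1 : θ < 1 := by simpa [hθ] using hd
  set q : (Fin k → Fin N) → ℝ := fun u => θ * p u + (1 - θ) * ((N : ℝ) ^ k)⁻¹ with hq
  have hM : (0 : ℝ) < ((N : ℝ) ^ k)⁻¹ := by positivity
  have hle : ∀ u, θ * p u ≤ q u := fun u =>
    le_add_of_nonneg_right (mul_nonneg (by linarith) hM.le)
  have hq0 : ∀ u, 0 < q u := fun u =>
    add_pos_of_nonneg_of_pos (mul_nonneg hθ0.le (hp0 u)) (mul_pos (by linarith) hM)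
  have hq1 : ∑ u, q u = 1 := by
    have hN' : (N : ℝ) ^ k ≠ 0 := by positivity
    simp only [hq, Finset.sum_add_distrib, ← Finset.mul_sum, hp1]
    simp [hN']
  have hqle : ∀ u, q u ≤ 1 := fun u => hq1 ▸
    Finset.single_le_sum (f := q) (fun v _ => (hq0 v).le) (Finset.mem_univ u)
  refine ⟨fun x => Real.log (q fun i => x i), ?_, fun x => Real.log_nonpos (hq0 _).le (hqle _),
    fun y => ?_, ?_⟩
  · exact (continuous_of_discreteTopology (f := fun u => Real.log (q u))).comp
      (continuous_pi fun i : Fin k => continuous_apply (i : ℕ))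
  · rw [transfer_iterate]
    refine (Finset.sum_congr rfl fun u _ => ?_).trans_le hq1.le
    rw [Real.exp_log (hq0 _)]
    exact congrArg q (funext fun i => by simp [prepend])
  · rw [integral_comp_restrict μ fun u => Real.log (q u)]
    have hpt : ∀ u, p u * Real.log (p u) + p u * -d ≤ p u * Real.log (q u) := by
      intro u
      rcases (hp0 u).eq_or_lt with h | h
      · simp [← h]
      · rw [← mul_add]
        refine mul_le_mul_of_nonneg_left ?_ h.le
        have := Real.log_le_log (mul_pos hθ0 h) (hle u)
        rw [Real.log_mul hθ0.ne' h.ne', hθ, Real.log_exp] at this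
        linarith
    have h := Finset.sum_le_sum fun u (_ : u ∈ Finset.univ) => hpt u
    rw [Finset.sum_add_distrib, ← Finset.sum_mul, hp1] at h
    refine le_trans (le_of_eq ?_) h
    simp only [entropyAux, hp]
    ring

/-- `s_w` is comparable with `exp (S_nΛ x)` for any `x ∈ [w]`. -/
theorem sWord_rpow_le {Λ : Seq N → ℝ} {c : ℝ} (hc : 1 ≤ c) (hdist : BddDistortion Λ c) (t : ℝ)
    {n : ℕ} (w : Fin n → Fin N) (y : Seq N) :
    sWord Λ (List.ofFn w) ^ t ≤ c ^ |t| * Real.exp (t * birkhoff Λ n (prepend w y)) := by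
  set x := prepend w y with hx
  have hmem : x ∈ cylinder (List.ofFn w) := prepend_mem_cylinder w y
  have hbd : ∀ z ∈ cylinder (List.ofFn w), Real.exp (birkhoff Λ n z) ≤
      c * Real.exp (birkhoff Λ n x) := by
    intro z hz
    refine hdist n z x fun k hk => ?_
    rw [hz k (by simpa using hk), hmem k (by simpa using hk)]
  have hlow : Real.exp (birkhoff Λ n x) ≤ sWord Λ (List.ofFn w) := by
    refine le_csSup ⟨c * Real.exp (birkhoff Λ n x), ?_⟩ ⟨x, hmem, by simp⟩
    rintro _ ⟨z, hz, rfl⟩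
    simpa using hbd z hz
  have hup : sWord Λ (List.ofFn w) ≤ c * Real.exp (birkhoff Λ n x) := by
    refine csSup_le ⟨_, x, hmem, rfl⟩ ?_
    rintro _ ⟨z, hz, rfl⟩
    simpa using hbd z hz
  have hexp : Real.exp (t * birkhoff Λ n x) = Real.exp (birkhoff Λ n x) ^ t := by
    rw [← Real.exp_mul, mul_comm]
  rw [hexp]
  rcases le_total 0 t with ht | ht
  · rw [abs_of_nonneg ht, ← Real.mul_rpow (by linarith) (Real.exp_nonneg _)]
    exact Real.rpow_le_rpow ((Real.exp_nonneg _).trans hlow) hup ht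
  · refine (Real.rpow_le_rpow_of_nonpos (Real.exp_pos _) hlow ht).trans ?_
    exact le_mul_of_one_le_left (by positivity) (Real.one_le_rpow hc (abs_nonneg t))

/-- Sum of `s_w^t` over the words of length `n` whose empirical measure, evaluated at the
extension by `y`, lies in `V`. -/
noncomputable def empSum (Λ : Seq N → ℝ) (t : ℝ) (y : Seq N) (V : Set (ProbabilityMeasure (Seq N)))
    (n : ℕ) : ℝ :=
  ∑ w : Fin n → Fin N, if emp n (prepend w y) ∈ V then sWord Λ (List.ofFn w) ^ t else 0

theorem sWord_nonneg (Λ : Seq N → ℝ) (w : Word N) : 0 ≤ sWord Λ w := by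
  refine Real.sSup_nonneg ?_
  rintro _ ⟨x, _, rfl⟩
  exact Real.exp_nonneg _

theorem empSum_mono (Λ : Seq N → ℝ) (t : ℝ) (y : Seq N) {V W : Set (ProbabilityMeasure (Seq N))}
    (h : V ⊆ W) (n : ℕ) : empSum Λ t y V n ≤ empSum Λ t y W n := by
  refine Finset.sum_le_sum fun w _ => ?_
  have := Real.rpow_nonneg (sWord_nonneg Λ (List.ofFn w)) t
  by_cases hV : emp n (prepend w y) ∈ V
  · rw [if_pos hV, if_pos (h hV)]
  · rw [if_neg hV]
    split_ifs <;> simp [this]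

theorem empSum_union_le (Λ : Seq N → ℝ) (t : ℝ) (y : Seq N)
    (V W : Set (ProbabilityMeasure (Seq N))) (n : ℕ) :
    empSum Λ t y (V ∪ W) n ≤ empSum Λ t y V n + empSum Λ t y W n := by
  rw [empSum, empSum, empSum, ← Finset.sum_add_distrib]
  refine Finset.sum_le_sum fun w _ => ?_
  have := Real.rpow_nonneg (sWord_nonneg Λ (List.ofFn w)) t
  simp only [mem_union]
  split_ifs <;> first | tauto | linarith

theorem levelSum_le_empSum {X : Type*} (Λ : Seq N → ℝ) (U : ProbabilityMeasure (Seq N) → X)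
    (B : Set X) (t : ℝ) (y : Seq N) (n : ℕ) :
    levelSum Λ U B t n ≤ empSum Λ t y (U ⁻¹' B) n := by
  refine Finset.sum_le_sum fun w _ => ?_
  have := Real.rpow_nonneg (sWord_nonneg Λ (List.ofFn w)) t
  by_cases hw : inTarget U B (List.ofFn w)
  · have hU := hw _ (prepend_mem_cylinder w y)
    rw [List.length_ofFn] at hU
    rw [if_pos hw, if_pos (show emp n (prepend w y) ∈ U ⁻¹' B from hU)]
  · rw [if_neg hw]
    split_ifs <;> simp [this]

theorem exists_nhds_empSum_le (hN : 0 < N) {Λ : Seq N → ℝ} (hΛ : Continuous Λ) {c : ℝ}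
    (hc : 1 ≤ c) (hdist : BddDistortion Λ c) (t : ℝ) (y : Seq N)
    (μ : ProbabilityMeasure (Seq N)) {a : ℝ}
    (ha : t * ∫ x, Λ x ∂μ.toMeasure + entropy μ < a) :
    ∃ V ∈ 𝓝 μ, ∃ D : ℝ, ∀ᶠ n : ℕ in atTop, empSum Λ t y V n ≤ D * Real.exp (n * a) := by
  obtain ⟨k, hk, hkb⟩ := exists_entropyAux_lt hN μ (lt_sub_iff_add_lt'.2 ha)
  have hk' : (0 : ℝ) < k := by exact_mod_cast hk
  set d : ℝ := (k * (a - t * ∫ x, Λ x ∂μ.toMeasure) - entropyAux μ k) / 2 with hd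
  have hd0 : 0 < d := by linarith
  obtain ⟨φ, hφc, hφ0, hφ1, hφμ⟩ := exists_block_weight hN μ k hd0
  set f : Seq N → ℝ := fun x => t * Λ x - φ x / k with hf
  have hfc : Continuous f := (hΛ.const_mul t).sub (hφc.div_const _)
  have hfμ : ∫ x, f x ∂μ.toMeasure < a := by
    rw [hf, integral_sub ((integrable_of_continuous hΛ μ).const_mul t)
      ((integrable_of_continuous hφc μ).div_const _), integral_const_mul, integral_div,
      sub_lt_iff_lt_add, ← sub_lt_iff_lt_add', lt_div_iff₀ hk']
    nlinarith
  refine ⟨{ν | ∫ x, f x ∂ν.toMeasure < a},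
    (isOpen_lt (continuous_integral hfc) continuous_const).mem_nhds hfμ,
    c ^ |t| * (N : ℝ) ^ (2 * k), ?_⟩
  filter_upwards [eventually_ge_atTop k] with n hn
  have hn0 : n ≠ 0 := by omega
  have hn' : (0 : ℝ) < n := by exact_mod_cast hk.trans_le hn
  have hc0 : 0 < c ^ |t| := Real.rpow_pos_of_pos (by linarith) _
  have hpt : ∀ w : Fin n → Fin N, (if emp n (prepend w y) ∈ {ν : ProbabilityMeasure (Seq N) |
      ∫ x, f x ∂ν.toMeasure < a} then sWord Λ (List.ofFn w) ^ t else 0) ≤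
      c ^ |t| * Real.exp (n * a) * Real.exp (birkhoff φ n (prepend w y) / k) := by
    intro w
    split_ifs with h
    · have h' : ∫ x, f x ∂(emp n (prepend w y)).toMeasure < a := h
      rw [integral_emp hfc hn0, div_lt_iff₀ hn'] at h'
      have hb : birkhoff f n (prepend w y) =
          t * birkhoff Λ n (prepend w y) - birkhoff φ n (prepend w y) / k := by
        simp only [birkhoff, hf, Finset.sum_sub_distrib, Finset.mul_sum, Finset.sum_div]
      refine (sWord_rpow_le hc hdist t w y).trans ?_
      rw [mul_assoc, ← Real.exp_add]
      gcongr
      linarith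
    · positivity
  refine (Finset.sum_le_sum fun w _ => hpt w).trans ?_
  rw [← Finset.mul_sum]
  calc _ ≤ c ^ |t| * Real.exp (n * a) * (N : ℝ) ^ (2 * k) := by
        gcongr
        exact sum_exp_birkhoff_div_le hN hk hφ0 hφ1 hn y
    _ = _ := by ring

/-- Empirical measures are asymptotically invariant. -/
theorem exists_nhds_emp_notMem {μ : ProbabilityMeasure (Seq N)} (hμ : ¬ Invariant μ) :
    ∃ V ∈ 𝓝 μ, ∀ᶠ n : ℕ in atTop, ∀ x, emp n x ∉ V := by
  have hshift : Measurable (shift : Seq N → Seq N) := continuous_shift.measurable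
  have hprob := Measure.isProbabilityMeasure_map (μ := μ.toMeasure) hshift.aemeasurable
  obtain ⟨g, hg⟩ : ∃ g : BoundedContinuousFunction (Seq N) ℝ,
      ∫ x, g (shift x) ∂μ.toMeasure ≠ ∫ x, g x ∂μ.toMeasure := by
    by_contra! h
    refine hμ (ext_of_forall_integral_eq_of_IsFiniteMeasure fun g => ?_)
    rw [integral_map hshift.aemeasurable g.continuous.aestronglyMeasurable]
    exact h g
  set f : Seq N → ℝ := fun x => g (shift x) - g x with hf
  have hgs : Continuous fun x => g (shift x) := g.continuous.comp continuous_shift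
  have hfc : Continuous f := hgs.sub g.continuous
  have hfμ : 0 < |∫ x, f x ∂μ.toMeasure| := by
    rw [hf, integral_sub (integrable_of_continuous hgs μ)
      (integrable_of_continuous g.continuous μ), abs_pos, sub_ne_zero]
    exact hg
  set δ := |∫ x, f x ∂μ.toMeasure| / 2 with hδ
  have hδ0 : 0 < δ := by linarith
  refine ⟨{ν | δ < |∫ x, f x ∂ν.toMeasure|},
    (isOpen_lt continuous_const (continuous_integral hfc).abs).mem_nhds
      (show δ < _ by linarith), ?_⟩
  obtain ⟨m, hm⟩ := exists_nat_gt (2 * ‖g‖ / δ)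
  filter_upwards [eventually_ge_atTop m, eventually_gt_atTop 0] with n hnm hn x hx
  have hx' : δ < |∫ z, f z ∂(emp n x).toMeasure| := hx
  have hn' : (0 : ℝ) < n := by exact_mod_cast hn
  have hb : birkhoff f n x = g (shift^[n] x) - g x := by
    simp only [birkhoff, hf, ← Function.iterate_succ_apply']
    exact Finset.sum_range_sub (fun i => g (shift^[i] x)) n
  rw [integral_emp hfc hn.ne', hb, abs_div, abs_of_pos hn', lt_div_iff₀ hn'] at hx'
  have h1 : |g (shift^[n] x) - g x| ≤ 2 * ‖g‖ := g.dist_le_two_norm _ _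
  have h2 : 2 * ‖g‖ < n * δ := (div_lt_iff₀ hδ0).1 (hm.trans_le (by exact_mod_cast hnm))
  linarith

theorem empSum_eq_zero (Λ : Seq N → ℝ) (t : ℝ) (y : Seq N)
    {V : Set (ProbabilityMeasure (Seq N))} {n : ℕ} (h : ∀ x, emp n x ∉ V) :
    empSum Λ t y V n = 0 :=
  Finset.sum_eq_zero fun _ _ => if_neg (h _)

theorem limsup_logDivE_le {u : ℕ → ℝ} {D a : ℝ}
    (h : ∀ᶠ n : ℕ in atTop, u n ≤ D * Real.exp (n * a)) :
    limsup (fun n : ℕ => logDivE (u n) n) atTop ≤ (a : EReal) := by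
  have hlim : Tendsto (fun n : ℕ => ((Real.log D / n + a : ℝ) : EReal)) atTop (𝓝 (a : EReal)) := by
    refine (continuous_coe_real_ereal.tendsto a).comp ?_
    simpa using (tendsto_const_div_atTop_nhds_zero_nat (Real.log D)).add_const a
  rw [← hlim.limsup_eq]
  refine limsup_le_limsup ?_
  filter_upwards [h, eventually_gt_atTop 0] with n hn hn0
  have hn' : (0 : ℝ) < n := by exact_mod_cast hn0
  unfold logDivE
  split_ifs with hu
  · have hD : 0 < D := pos_of_mul_pos_left (hu.trans_le hn) (Real.exp_nonneg _)
    have hlog := Real.log_le_log hu hn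
    rw [Real.log_mul hD.ne' (Real.exp_ne_zero _), Real.log_exp] at hlog
    rw [EReal.coe_le_coe_iff, div_add' _ _ _ hn'.ne']
    gcongr
    linarith
  · exact bot_le

theorem isClosed_cball {X : Type*} [MetricSpace X] (C : Set X) (r : ℝ) : IsClosed (cball C r) :=
  isClosed_le (continuous_infDist_pt C) continuous_const

/-- **Theorem 5.2.** For all `t ∈ ℝ`,
`limsup_n (1/n) log ∑_{|i|=n, U(L_n[i]) ⊆ B(C,r)} s_i^t ≤
  sup { t∫Λdμ + h(μ) : μ invariant, Uμ ∈ B(C,r) }`. -/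
theorem limsup_levelSum_le
    {N : ℕ} (hN : 0 < N) {X : Type*} [MetricSpace X]
    (Λ : Seq N → ℝ) (hΛcont : Continuous Λ)
    (cmin cmax : ℝ) (hcmax : cmax < 0) (hccmin : cmin ≤ cmax)
    (hΛbdd : ∀ x, Λ x ∈ Set.Icc cmin cmax)
    (c : ℝ) (hc : 1 ≤ c) (hdist : BddDistortion Λ c)
    (U : ProbabilityMeasure (Seq N) → X) (hU : Continuous U)
    (C : Set X) (hC : IsClosed C) (r : ℝ) (hr : 0 < r) (t : ℝ) :
    Filter.limsup (fun n : ℕ => logDivE (levelSum Λ U (cball C r) t n) n) Filter.atTop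
      ≤ sSup {x : EReal | ∃ μ : ProbabilityMeasure (Seq N), Invariant μ ∧ U μ ∈ cball C r ∧
          x = ((t * ∫ y, Λ y ∂μ.toMeasure + entropy μ : ℝ) : EReal)} := by
  have y : Seq N := fun _ => ⟨0, hN⟩
  have hK : IsCompact (U ⁻¹' cball C r) := ((isClosed_cball C r).preimage hU).isCompact
  refine le_of_forall_gt_imp_ge_of_dense fun b hb => ?_
  obtain ⟨a, hSa, hab⟩ := EReal.lt_iff_exists_real_btwn.1 hb
  refine le_trans ?_ hab.le
  obtain ⟨D, hD⟩ : ∃ D : ℝ, ∀ᶠ n : ℕ in atTop,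
      empSum Λ t y (U ⁻¹' cball C r) n ≤ D * Real.exp (n * a) := by
    refine hK.induction_on (p := fun V => ∃ D : ℝ, ∀ᶠ n : ℕ in atTop,
      empSum Λ t y V n ≤ D * Real.exp (n * a)) ?_ ?_ ?_ ?_
    · exact ⟨0, Eventually.of_forall fun n =>
        by rw [empSum_eq_zero Λ t y fun x => notMem_empty _, zero_mul]⟩
    · rintro V W hVW ⟨D, hD⟩
      exact ⟨D, hD.mono fun n hn => (empSum_mono Λ t y hVW n).trans hn⟩
    · rintro V W ⟨D, hD⟩ ⟨D', hD'⟩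
      refine ⟨D + D', ?_⟩
      filter_upwards [hD, hD'] with n h h'
      rw [add_mul]
      exact (empSum_union_le Λ t y V W n).trans (add_le_add h h')
    · intro μ hμ
      by_cases hinv : Invariant μ
      · have hlt : t * ∫ x, Λ x ∂μ.toMeasure + entropy μ < a :=
          EReal.coe_lt_coe_iff.1 (lt_of_le_of_lt (le_sSup (by exact ⟨μ, hinv, hμ, rfl⟩)) hSa)
        obtain ⟨V, hV, hb⟩ := exists_nhds_empSum_le hN hΛcont hc hdist t y μ hlt
        exact ⟨V, mem_nhdsWithin_of_mem_nhds hV, hb⟩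
      · obtain ⟨V, hV, hb⟩ := exists_nhds_emp_notMem hinv
        exact ⟨V, mem_nhdsWithin_of_mem_nhds hV, 0, hb.mono fun n hn => by
          rw [empSum_eq_zero Λ t y hn, zero_mul]⟩
  exact limsup_logDivE_le (hD.mono fun n hn => (levelSum_le_empSum Λ U _ t y n).trans hn)

end Multifractal
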